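/- arXiv:1506.06539 — 2 statements merged into one kernel-verified Lean document; each statement's English description precedes it below -/
import Mathlib

section
/- Fix c ∈ ℂ with c ≠ 0, an integer R ≥ 1 and an integer N ≥ 0, and set M = N+R. Let μ_1,…,μ_N be complex numbers, λ_1,…,λ_M pairwise distinct complex numbers with μ_k ≠ λ_j and λ_m−λ_j±ic ≠ 0 for all indices, and λ_p, λ_s ∈ ℂ with (λ_p−λ_j)²+c² ≠ 0, (λ_s−λ_j)²+c² ≠ 0, Ṽ⁺_j ≠ Ṽ⁻_j for all j, Ṽ⁺_p ≠ Ṽ⁻_p, and Ξ_1 ≠ 0. Then det_M(δ_{jk}+Ũ_{jk}) / (Ṽ⁺_p−Ṽ⁻_p) = det_M(𝓜_{jk}) / Ξ_1, where 𝓜_{j1} = Ξ_j·K(λ_s,λ_j)/(Ṽ⁺_j−Ṽ⁻_j) and, for k ≥ 2, 𝓜_{jk} = δ_{jk} + [i/(Ṽ⁺_j−Ṽ⁻_j)]·Ξ_j·K(λ_j,λ_k). -/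
open Complex Finset Matrix

namespace LL

noncomputable def Kk (c x y : ℂ) : ℂ := 2 * c / ((x - y) ^ 2 + c ^ 2)

noncomputable def Vp {N M : ℕ} (c : ℂ) (μ : Fin N → ℂ) (lam : Fin M → ℂ) (x : ℂ) : ℂ :=
  (∏ m, (μ m - x + I * c)) / ∏ m, (lam m - x + I * c)

noncomputable def Vm {N M : ℕ} (c : ℂ) (μ : Fin N → ℂ) (lam : Fin M → ℂ) (x : ℂ) : ℂ :=
  (∏ m, (μ m - x - I * c)) / ∏ m, (lam m - x - I * c)

noncomputable def Xi {N M : ℕ} (μ : Fin N → ℂ) (lam : Fin M → ℂ) (j : Fin M) : ℂ :=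
  (∏ m, (μ m - lam j)) / ∏ m ∈ Finset.univ.erase j, (lam m - lam j)

noncomputable def Umat {N M : ℕ} (c : ℂ) (μ : Fin N → ℂ) (lam : Fin M → ℂ) (lp ls : ℂ) :
    Matrix (Fin M) (Fin M) ℂ := fun j k =>
  I / (Vp c μ lam (lam j) - Vm c μ lam (lam j)) * Xi μ lam j *
    (Kk c (lam j) (lam k) - Kk c lp (lam k) * Kk c ls (lam j))

noncomputable def U1mat {N M : ℕ} (c : ℂ) (μ : Fin N → ℂ) (lam : Fin M → ℂ) (lp : ℂ) :
    Matrix (Fin M) (Fin M) ℂ := fun j k =>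
  I / (Vp c μ lam (lam j) - Vm c μ lam (lam j)) * Xi μ lam j *
    (Kk c (lam j) (lam k) - Kk c lp (lam k))

noncomputable def U2mat {N M : ℕ} (c : ℂ) (μ : Fin N → ℂ) (lam : Fin M → ℂ) (lp : ℂ) :
    Matrix (Fin M) (Fin M) ℂ := fun j k =>
  U1mat c μ lam lp j k + I / (Vp c μ lam (lam j) - Vm c μ lam (lam j)) * Kk c lp (lam k)

noncomputable def HR {N M : ℕ} (c sc : ℂ) (R : ℕ) (μ : Fin N → ℂ) (lam : Fin M → ℂ)
    (lp ls : ℂ) : ℂ :=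
  (I * sc) ^ R / (c ^ (2 * R - 1) * ((R - 1).factorial : ℂ)) * (-1 : ℂ) ^ (N * (R - 1)) *
    (∏ j, ∏ k, (lam j - lam k + I * c)) *
    (∏ j, ∏ k, (lam j - μ k)⁻¹) *
    (∏ j, (Vp c μ lam (lam j) - Vm c μ lam (lam j))) *
    (1 + Umat c μ lam lp ls).det /
    ((Vp c μ lam lp - Vm c μ lam lp) * (Vp c μ lam ls - Vm c μ lam ls))

noncomputable def Jcal {N : ℕ} (μ lam : Fin N → ℂ) : ℂ :=
  (∑ j, lam j - ∑ j, μ j) ^ 4 -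
    4 * (∑ j, lam j - ∑ j, μ j) * (∑ j, lam j ^ 3 - ∑ j, μ j ^ 3) +
    3 * (∑ j, lam j ^ 2 - ∑ j, μ j ^ 2) ^ 2

noncomputable def Fff {N : ℕ} (c : ℂ) (μ lam : Fin N → ℂ) (lp ls : ℂ) : ℂ :=
  (-1 : ℂ) ^ N * (Jcal μ lam / (6 * c)) *
    (∏ j, ∏ k, (lam j - lam k + I * c)) *
    (∏ j, ∏ k, (lam j - μ k)⁻¹) *
    (∏ j, (Vp c μ lam (lam j) - Vm c μ lam (lam j))) *
    (1 + Umat c μ lam lp ls).det /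
    ((Vp c μ lam lp - Vm c μ lam lp) * (Vp c μ lam ls - Vm c μ lam ls))

noncomputable def Tcal {N M : ℕ} (μ : Fin N → ℂ) (lam : Fin M → ℂ) : ℂ :=
  (1 / 2 : ℂ) * ((∑ j, lam j - ∑ j, μ j) ^ 2 - (∑ j, lam j ^ 2 - ∑ j, μ j ^ 2))

noncomputable def Gff {N M : ℕ} (c sc : ℂ) (μ : Fin N → ℂ) (lam : Fin M → ℂ) (lp ls : ℂ) : ℂ :=
  -I * (Tcal μ lam / (c * sc)) *
    (∏ j, ∏ k, (lam j - lam k + I * c)) *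
    (∏ j, ∏ k, (lam j - μ k)⁻¹) *
    (∏ j, (Vp c μ lam (lam j) - Vm c μ lam (lam j))) *
    (1 + Umat c μ lam lp ls).det /
    ((Vp c μ lam lp - Vm c μ lam lp) * (Vp c μ lam ls - Vm c μ lam ls))

noncomputable def fsc (c x y : ℂ) : ℂ := (x - y + I * c) / (x - y)

noncomputable def stringRap (cb : ℝ) (M : ℕ) (δ : Fin M → ℂ) (j : Fin M) : ℂ :=
  I * ((cb : ℂ) / 2) * ((M : ℂ) - 1 - 2 * (j.val : ℂ)) + I * δ j

end LL

open LL



theorem aux_pf {N M : ℕ} (h : N < M) (μ : Fin N → ℂ) (lam : Fin M → ℂ)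
    (hinj : Function.Injective lam) (x : ℂ) (hx : ∀ m, lam m - x ≠ 0) :
    (∏ m, (μ m - x)) / ∏ m, (lam m - x) = ∑ k, Xi μ lam k / (lam k - x) := by
  have hv : Set.InjOn (fun k => - lam k) (↑(Finset.univ : Finset (Fin M))) := by
    intro a _ b _ hab
    exact hinj (neg_injective hab)
  have hprod : (∏ m, (lam m - x)) ≠ 0 := Finset.prod_ne_zero_iff.mpr fun m _ => hx m
  have hdeg : (∏ m, (Polynomial.X + Polynomial.C (μ m))).degree
      < ((Finset.univ : Finset (Fin M)).card : WithBot ℕ) := by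
    rw [Polynomial.degree_prod]
    simpa using h
  have h1 := Lagrange.eq_interpolate hv hdeg
  have h2 := congrArg (Polynomial.eval (-x)) h1
  rw [Lagrange.eval_interpolate_not_at_node] at h2
  · rw [div_eq_iff hprod]
    simp only [Polynomial.eval_prod, Polynomial.eval_add, Polynomial.eval_X, Polynomial.eval_C,
      Lagrange.eval_nodal, Lagrange.nodalWeight] at h2
    have e1 : (∏ m, (μ m - x)) = ∏ m, (-x + μ m) :=
      Finset.prod_congr rfl fun m _ => by ring
    have e2 : (∏ m, (lam m - x)) = ∏ m, (-x - -lam m) :=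
      Finset.prod_congr rfl fun m _ => by ring
    rw [e1, h2, ← e2, mul_comm]
    congr 1
    refine Finset.sum_congr rfl fun k _ => ?_
    have e3 : (∏ m, (-lam k + μ m)) = ∏ m, (μ m - lam k) :=
      Finset.prod_congr rfl fun m _ => by ring
    have e4 : (∏ j ∈ Finset.univ.erase k, (-lam k - -lam j)⁻¹)
        = (∏ m ∈ Finset.univ.erase k, (lam m - lam k))⁻¹ := by
      rw [← Finset.prod_inv_distrib]
      exact Finset.prod_congr rfl fun m _ => by congr 1; ring
    have e5 : (-x - -lam k) = lam k - x := by ring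
    rw [e3, e4, e5, Xi]
    simp only [div_eq_mul_inv]
    ring
  · intro k _ hk
    exact hx k (by linear_combination hk)

theorem aux_V {N M : ℕ} (h : N < M) (c : ℂ) (μ : Fin N → ℂ) (lam : Fin M → ℂ)
    (hinj : Function.Injective lam) (x : ℂ) (hx : ∀ m, (x - lam m) ^ 2 + c ^ 2 ≠ 0) :
    ∑ k, Kk c x (lam k) * Xi μ lam k = I * (Vp c μ lam x - Vm c μ lam x) := by
  have hf : ∀ m, (lam m - (x - I * c)) * (lam m - (x + I * c)) = (x - lam m) ^ 2 + c ^ 2 := by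
    intro m
    linear_combination (-c ^ 2) * I_sq
  have ha : ∀ m, lam m - (x - I * c) ≠ 0 := fun m => left_ne_zero_of_mul (hf m ▸ hx m)
  have hb : ∀ m, lam m - (x + I * c) ≠ 0 := fun m => right_ne_zero_of_mul (hf m ▸ hx m)
  have h1 := aux_pf h μ lam hinj _ ha
  have h2 := aux_pf h μ lam hinj _ hb
  have e1 : Vp c μ lam x = ∑ k, Xi μ lam k / (lam k - (x - I * c)) := by
    rw [← h1, Vp]
    congr 1 <;> exact Finset.prod_congr rfl fun m _ => by ring
  have e2 : Vm c μ lam x = ∑ k, Xi μ lam k / (lam k - (x + I * c)) := by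
    rw [← h2, Vm]
    congr 1 <;> exact Finset.prod_congr rfl fun m _ => by ring
  rw [e1, e2, ← Finset.sum_sub_distrib, Finset.mul_sum]
  refine Finset.sum_congr rfl fun k _ => ?_
  rw [Kk, ← hf k, div_sub_div _ _ (ha k) (hb k), div_mul_eq_mul_div, ← mul_div_assoc]
  congr 1
  linear_combination (2 * c * Xi μ lam k) * I_sq

theorem aux_det {n : Type*} [Fintype n] [DecidableEq n] (A B : Matrix n n ℂ) (z : n)
    (v w b : n → ℂ) (d : ℂ) (hA : A *ᵥ v = d • w) (hz : ∀ j, B j z = w j)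
    (hB : ∀ j k, k ≠ z → B j k = A j k + b k * w j) :
    v z * A.det = d * B.det := by
  have h1 : (A.updateCol z (A *ᵥ v)).det = v z * A.det := by
    have h2 := Matrix.det_updateCol_sum A z v
    rw [smul_eq_mul] at h2
    rw [← h2]
    congr 2
    ext j
    simp only [Matrix.mulVec, dotProduct, smul_eq_mul]
    exact Finset.sum_congr rfl fun k _ => mul_comm _ _
  rw [← h1, hA, Matrix.det_updateCol_smul]
  congr 1
  rw [← Matrix.det_transpose, ← Matrix.det_transpose B]
  refine Matrix.det_eq_of_forall_row_eq_smul_add_const (fun k => if k = z then 0 else - b k) z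
    (by simp) ?_
  intro k j
  by_cases hk : k = z
  · subst hk
    simp [hz]
  · simp [hk, hz, hB j k hk]

/-- Cancellation of the auxiliary parameter `λ_p` from the determinant formula for
the form factor of `Ψ^R(0)`:
`det_M(δ+Ũ)/(Ṽ⁺_p−Ṽ⁻_p) = det_M(𝓜)/Ξ₁`, where the first column of `𝓜` is
`Ξ_j·K(λ_s,λ_j)/(Ṽ⁺_j−Ṽ⁻_j)` and, for `k ≥ 2`, `𝓜_{jk} = δ_{jk} + (i/(Ṽ⁺_j−Ṽ⁻_j))·Ξ_j·K(λ_j,λ_k)`. -/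
theorem det_aux_param_cancellation {N R : ℕ} (c : ℂ) (hc : c ≠ 0) (hR : 1 ≤ R)
    (μ : Fin N → ℂ) (lam : Fin (N + R) → ℂ) (hinj : Function.Injective lam)
    (hmulam : ∀ k j, μ k ≠ lam j)
    (hpm : ∀ m j, lam m - lam j + I * c ≠ 0 ∧ lam m - lam j - I * c ≠ 0)
    (lp ls : ℂ)
    (hp1 : ∀ j, (lp - lam j) ^ 2 + c ^ 2 ≠ 0)
    (hs1 : ∀ j, (ls - lam j) ^ 2 + c ^ 2 ≠ 0)
    (hV : ∀ j, Vp c μ lam (lam j) ≠ Vm c μ lam (lam j))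
    (hVp : Vp c μ lam lp ≠ Vm c μ lam lp)
    (hXi1 : Xi μ lam (⟨0, by omega⟩ : Fin (N + R)) ≠ 0) :
    (1 + Umat c μ lam lp ls).det / (Vp c μ lam lp - Vm c μ lam lp) =
      (Matrix.of fun j k : Fin (N + R) =>
          if k = (⟨0, by omega⟩ : Fin (N + R)) then
            Xi μ lam j * Kk c ls (lam j) /
              (Vp c μ lam (lam j) - Vm c μ lam (lam j))
          else
            (if j = k then (1 : ℂ) else 0) +
              I / (Vp c μ lam (lam j) - Vm c μ lam (lam j)) * Xi μ lam j *
                Kk c (lam j) (lam k)).det /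
        Xi μ lam (⟨0, by omega⟩ : Fin (N + R)) := by
  have hNM : N < N + R := by omega
  have hz : ∀ j k, (lam j - lam k) ^ 2 + c ^ 2 ≠ 0 := by
    intro j k h0
    refine mul_ne_zero (hpm j k).1 (hpm j k).2 ?_
    linear_combination h0 - c ^ 2 * I_sq
  have hD : ∀ j, Vp c μ lam (lam j) - Vm c μ lam (lam j) ≠ 0 := fun j => sub_ne_zero.mpr (hV j)
  rw [div_eq_div_iff (sub_ne_zero.mpr hVp) hXi1, mul_comm, mul_comm (Matrix.det (Matrix.of _))]
  refine aux_det _ _ _ (Xi μ lam)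
    (fun j => Xi μ lam j * Kk c ls (lam j) / (Vp c μ lam (lam j) - Vm c μ lam (lam j)))
    (fun k => I * Kk c lp (lam k)) _ ?_ ?_ ?_
  · rw [Matrix.add_mulVec, Matrix.one_mulVec]
    ext j
    have e1 := aux_V hNM c μ lam hinj (lam j) (hz j)
    have e2 := aux_V hNM c μ lam hinj lp hp1
    have e3 : (Umat c μ lam lp ls *ᵥ Xi μ lam) j =
        I / (Vp c μ lam (lam j) - Vm c μ lam (lam j)) * Xi μ lam j *
          (∑ k, Kk c (lam j) (lam k) * Xi μ lam k
            - Kk c ls (lam j) * ∑ k, Kk c lp (lam k) * Xi μ lam k) := by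
      rw [Finset.mul_sum, ← Finset.sum_sub_distrib, Finset.mul_sum]
      simp only [Matrix.mulVec, dotProduct]
      refine Finset.sum_congr rfl fun k _ => ?_
      simp only [Umat]
      ring
    rw [Pi.add_apply, e3, e1, e2, Pi.smul_apply, smul_eq_mul]
    have := hD j
    generalize Vp c μ lam (lam j) - Vm c μ lam (lam j) = D at *
    field_simp
    linear_combination Xi μ lam j * (D - (Vp c μ lam lp - Vm c μ lam lp) * Kk c ls (lam j)) * I_sq
  · intro j
    simp
  · intro j k hk
    simp only [Matrix.of_apply, if_neg hk, Matrix.add_apply, Matrix.one_apply, Umat]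
    ring
end

section
/- Fix c ∈ ℂ with c ≠ 0, a square root √c, and N ≥ 1. Let λ_1,…,λ_N be pairwise distinct with λ_m−λ_j±ic ≠ 0, and let μ_1,…,μ_{N−1}, λ_p, λ_s be fixed complex numbers satisfying the nondegeneracy hypotheses (for both expressions below). Then, as μ_N → ∞, F(μ_1,…,μ_N; λ_1,…,λ_N; λ_p,λ_s) → 2i√c · G(μ_1,…,μ_{N−1}; λ_1,…,λ_N; λ_p,λ_s). -/
open Complex Finset Matrix

open LL

section aux
open Filter Topology

lemma aux_inv : Tendsto (fun x : ℂ => x⁻¹) (Bornology.cobounded ℂ) (𝓝 0) :=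
  tendsto_inv₀_cobounded

lemma aux_ne : ∀ᶠ x : ℂ in Bornology.cobounded ℂ, x ≠ 0 := by
  have h : Bornology.IsBounded ({0} : Set ℂ) := Bornology.isBounded_singleton
  exact Bornology.isBounded_def.1 h

lemma aux_lin (a : ℂ) : Tendsto (fun x : ℂ => (x + a) / x) (Bornology.cobounded ℂ) (𝓝 1) := by
  have h : Tendsto (fun x : ℂ => 1 + a * x⁻¹) (Bornology.cobounded ℂ) (𝓝 (1 + a * 0)) :=
    tendsto_const_nhds.add (tendsto_const_nhds.mul aux_inv)
  rw [mul_zero, add_zero] at h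
  refine h.congr' ?_
  filter_upwards [aux_ne] with x hx
  field_simp

lemma aux_V_s11 {n M : ℕ} (c : ℂ) (μ0 : Fin n → ℂ) (lam : Fin M → ℂ) (z : ℂ) :
    Tendsto (fun x : ℂ => (Vp c (Fin.snoc μ0 x : Fin (n+1) → ℂ) lam z
      - Vm c (Fin.snoc μ0 x : Fin (n+1) → ℂ) lam z) / x)
      (Bornology.cobounded ℂ) (𝓝 (Vp c μ0 lam z - Vm c μ0 lam z)) := by
  have h := ((aux_lin (-z + I * c)).const_mul (Vp c μ0 lam z)).sub
    ((aux_lin (-z - I * c)).const_mul (Vm c μ0 lam z))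
  rw [mul_one, mul_one] at h
  refine h.congr fun x => ?_
  simp only [Vp, Vm, Fin.prod_univ_castSucc (n := n), Fin.snoc_castSucc, Fin.snoc_last]
  ring

lemma aux_Xi {n M : ℕ} (μ0 : Fin n → ℂ) (lam : Fin M → ℂ) (j : Fin M) :
    Tendsto (fun x : ℂ => Xi (Fin.snoc μ0 x : Fin (n+1) → ℂ) lam j / x)
      (Bornology.cobounded ℂ) (𝓝 (Xi μ0 lam j)) := by
  have h := (aux_lin (-lam j)).const_mul (Xi μ0 lam j)
  rw [mul_one] at h
  refine h.congr fun x => ?_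
  simp only [Xi, Fin.prod_univ_castSucc (n := n), Fin.snoc_castSucc, Fin.snoc_last]
  ring

lemma aux_J {n : ℕ} (μ0 : Fin n → ℂ) (lam : Fin (n+1) → ℂ) :
    Tendsto (fun x : ℂ => Jcal (Fin.snoc μ0 x : Fin (n+1) → ℂ) lam / x ^ 2)
      (Bornology.cobounded ℂ) (𝓝 (12 * Tcal μ0 lam)) := by
  set P := ∑ j, lam j - ∑ j, μ0 j with hP
  set E := ∑ j, lam j ^ 2 - ∑ j, μ0 j ^ 2 with hE
  set Q := ∑ j, lam j ^ 3 - ∑ j, μ0 j ^ 3 with hQ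
  have h : Tendsto (fun x : ℂ => 6 * (P ^ 2 - E) + (4 * Q - 4 * P ^ 3) * x⁻¹
      + (P ^ 4 - 4 * P * Q + 3 * E ^ 2) * (x⁻¹ * x⁻¹)) (Bornology.cobounded ℂ)
      (𝓝 (6 * (P ^ 2 - E) + (4 * Q - 4 * P ^ 3) * 0
      + (P ^ 4 - 4 * P * Q + 3 * E ^ 2) * (0 * 0))) :=
    (tendsto_const_nhds.add (aux_inv.const_mul _)).add ((aux_inv.mul aux_inv).const_mul _)
  have e : 12 * Tcal μ0 lam = 6 * (P ^ 2 - E) + (4 * Q - 4 * P ^ 3) * 0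
      + (P ^ 4 - 4 * P * Q + 3 * E ^ 2) * (0 * 0) := by
    simp only [Tcal, ← hP, ← hE]; ring
  rw [e]
  refine h.congr' ?_
  filter_upwards [aux_ne] with x hx
  have : Jcal (Fin.snoc μ0 x : Fin (n+1) → ℂ) lam
      = (P - x) ^ 4 - 4 * (P - x) * (Q - x ^ 3) + 3 * (E - x ^ 2) ^ 2 := by
    simp only [Jcal, hP, hE, hQ, Fin.sum_univ_castSucc (n := n) (f := fun j => Fin.snoc (α := fun _ => ℂ) μ0 x j),
      Fin.sum_univ_castSucc (n := n) (f := fun j => Fin.snoc (α := fun _ => ℂ) μ0 x j ^ 2),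
      Fin.sum_univ_castSucc (n := n) (f := fun j => Fin.snoc (α := fun _ => ℂ) μ0 x j ^ 3),
      Fin.snoc_castSucc, Fin.snoc_last]
    ring
  rw [this]
  field_simp
  ring

lemma aux_det_s11 {n M : ℕ} (c : ℂ) (μ0 : Fin n → ℂ) (lam : Fin M → ℂ) (lp ls : ℂ)
    (hV : ∀ j, Vp c μ0 lam (lam j) ≠ Vm c μ0 lam (lam j)) :
    Tendsto (fun x : ℂ => (1 + Umat c (Fin.snoc μ0 x : Fin (n+1) → ℂ) lam lp ls).det)
      (Bornology.cobounded ℂ) (𝓝 (1 + Umat c μ0 lam lp ls).det) := by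
  have h : Tendsto (fun x : ℂ => (1 + Umat c (Fin.snoc μ0 x : Fin (n+1) → ℂ) lam lp ls))
      (Bornology.cobounded ℂ) (𝓝 (1 + Umat c μ0 lam lp ls)) := by
    refine tendsto_const_nhds.add ?_
    refine tendsto_pi_nhds.2 fun j => tendsto_pi_nhds.2 fun k => ?_
    have h := ((tendsto_const_nhds (x := I)).div (aux_V_s11 c μ0 lam (lam j))
      (sub_ne_zero.2 (hV j))).mul (aux_Xi μ0 lam j)
    refine (h.mul_const (Kk c (lam j) (lam k) - Kk c lp (lam k) * Kk c ls (lam j))).congr' ?_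
    filter_upwards [aux_ne] with x hx
    simp only [Umat, Pi.div_apply]
    congr 1
    rw [div_div_eq_mul_div, div_mul_div_comm, mul_right_comm, mul_div_mul_right _ _ hx,
      div_mul_eq_mul_div]
  exact ((Continuous.matrix_det continuous_id).tendsto _).comp h

lemma aux_P {n : ℕ} (μ0 : Fin n → ℂ) (lam : Fin (n+1) → ℂ) :
    Tendsto (fun x : ℂ => (-1 : ℂ) ^ (n+1) * x ^ (n+1) *
        ∏ j, ∏ k, (lam j - (Fin.snoc μ0 x : Fin (n+1) → ℂ) k)⁻¹)
      (Bornology.cobounded ℂ) (𝓝 (∏ j, ∏ k, (lam j - μ0 k)⁻¹)) := by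
  have h : Tendsto (fun x : ℂ => ∏ j, ((∏ k, (lam j - μ0 k)⁻¹) * ((x + -lam j) / x)⁻¹))
      (Bornology.cobounded ℂ) (𝓝 (∏ j, ((∏ k, (lam j - μ0 k)⁻¹) * (1:ℂ)⁻¹))) :=
    tendsto_finsetProd _ fun j _ => ((aux_lin _).inv₀ one_ne_zero).const_mul _
  simp only [inv_one, mul_one] at h
  refine h.congr fun x => ?_
  have e : (-1 : ℂ) ^ (n+1) * x ^ (n+1) = ∏ _j : Fin (n+1), (-x) := by
    rw [← mul_pow]; simp
  rw [e, ← Finset.prod_mul_distrib]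
  refine Finset.prod_congr rfl fun j _ => ?_
  rw [Fin.prod_univ_castSucc (n := n)]
  simp only [Fin.snoc_castSucc, Fin.snoc_last]
  rw [inv_div, show lam j - x = -(x + -lam j) by ring, inv_neg]
  ring

end aux

/-- Asymptotics (property 2 with `h = 2, k = 2`): as `μ_N → ∞`, the determinant formula `F`
for the form factor of `(Ψ†(0))²Ψ²(0)` (built from `N` μ's and `N` λ's) tends to
`2i√c · G(μ₁,…,μ_{N−1}; λ₁,…,λ_N)`. -/
theorem F_tendsto_at_infty {n : ℕ} (c sc : ℂ) (hc : c ≠ 0) (hsc : sc ^ 2 = c)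
    (μ0 : Fin n → ℂ) (lam : Fin (n + 1) → ℂ) (hinj : Function.Injective lam)
    (lp ls : ℂ)
    (hmulam : ∀ k j, μ0 k ≠ lam j)
    (hpm : ∀ j k, lam j - lam k + I * c ≠ 0 ∧ lam j - lam k - I * c ≠ 0)
    (hp1 : ∀ j, (lp - lam j) ^ 2 + c ^ 2 ≠ 0)
    (hs1 : ∀ j, (ls - lam j) ^ 2 + c ^ 2 ≠ 0)
    (hVred : ∀ j, Vp c μ0 lam (lam j) ≠ Vm c μ0 lam (lam j))
    (hVredp : Vp c μ0 lam lp ≠ Vm c μ0 lam lp)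
    (hVreds : Vp c μ0 lam ls ≠ Vm c μ0 lam ls) :
    Filter.Tendsto (fun x : ℂ => Fff c (Fin.snoc μ0 x) lam lp ls)
      (Bornology.cobounded ℂ ⊓ Filter.principal
        {x : ℂ |
          (∀ j, x ≠ lam j) ∧
          (∀ j, Vp c (Fin.snoc μ0 x) lam (lam j) ≠ Vm c (Fin.snoc μ0 x) lam (lam j)) ∧
          Vp c (Fin.snoc μ0 x) lam lp ≠ Vm c (Fin.snoc μ0 x) lam lp ∧
          Vp c (Fin.snoc μ0 x) lam ls ≠ Vm c (Fin.snoc μ0 x) lam ls})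
      (nhds (2 * I * sc * Gff c sc μ0 lam lp ls)) := by
  refine Filter.Tendsto.mono_left ?_ inf_le_left
  have hsc0 : sc ≠ 0 := by
    rintro rfl
    exact hc (by rw [← hsc]; simp)
  have hJ := (aux_J μ0 lam).div_const (6 * c)
  have hP := aux_P μ0 lam
  have hV := tendsto_finsetProd (Finset.univ) fun j (_ : j ∈ Finset.univ) =>
    aux_V_s11 c μ0 lam (lam j)
  have hD := aux_det_s11 c μ0 lam lp ls hVred
  have hden := (aux_V_s11 c μ0 lam lp).mul (aux_V_s11 c μ0 lam ls)
  have hden0 := mul_ne_zero (sub_ne_zero.2 hVredp) (sub_ne_zero.2 hVreds)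
  have key := ((((hJ.mul_const (∏ j, ∏ k, (lam j - lam k + I * c))).mul hP).mul hV).mul hD).div
    hden hden0
  have e : 2 * I * sc * Gff c sc μ0 lam lp ls = 12 * Tcal μ0 lam / (6 * c) *
      (∏ j, ∏ k, (lam j - lam k + I * c)) * (∏ j, ∏ k, (lam j - μ0 k)⁻¹) *
      (∏ j, (Vp c μ0 lam (lam j) - Vm c μ0 lam (lam j))) * (1 + Umat c μ0 lam lp ls).det /
      ((Vp c μ0 lam lp - Vm c μ0 lam lp) * (Vp c μ0 lam ls - Vm c μ0 lam ls)) := by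
    have e1 : 12 * Tcal μ0 lam / (6 * c) = 2 * I * sc * (-I * (Tcal μ0 lam / (c * sc))) := by
      field_simp
      rw [I_sq]
      ring
    rw [e1, Gff]
    ring
  rw [e]
  refine key.congr' ?_
  filter_upwards [aux_ne] with x hx
  simp only [Fff, Pi.div_apply, Finset.prod_div_distrib, Finset.prod_const, Finset.card_univ,
    Fintype.card_fin]
  generalize (1 + Umat c (Fin.snoc μ0 x) lam lp ls).det = D
  generalize (∏ j, (Vp c (Fin.snoc μ0 x) lam (lam j) - Vm c (Fin.snoc μ0 x) lam (lam j))) = W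
  generalize Vp c (Fin.snoc μ0 x) lam lp - Vm c (Fin.snoc μ0 x) lam lp = a
  generalize Vp c (Fin.snoc μ0 x) lam ls - Vm c (Fin.snoc μ0 x) lam ls = b
  generalize Jcal (Fin.snoc μ0 x) lam = J
  generalize (∏ j, ∏ k, (lam j - (Fin.snoc μ0 x : Fin (n+1) → ℂ) k)⁻¹) = R
  generalize (∏ j, ∏ k, (lam j - lam k + I * c)) = A
  generalize (-1 : ℂ) ^ (n+1) = s
  have hxn : x ^ (n+1) ≠ 0 := pow_ne_zero _ hx
  generalize x ^ (n+1) = X at hxn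
  rw [div_mul_div_comm a x b x]
  generalize a * b = t
  rw [div_div_eq_mul_div]
  congr 1
  field_simp
end
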